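/- (Data processing inequality for quantized mutual information) If discrete random variables X, Y, V form a Markov chain X - Y - V in this order, then for every positive integer M, I(X;[V]_M) ≤ I(X;[Y]_M). -/

import Mathlib

/-!
The proof replaces a stochastic quantizer of `Y` by a deterministic one that is at least as good.

Fix a quantizer `f` of `V` and let `q` be the joint law of `(X, f(V))`, with information density
`φ(x,m) = log (q(x,m) / (q(x) q(m)))`. For any joint law `q'` with the same `X`-marginal and with
`q' ≪ q`, Gibbs' inequality gives `I(q') ≥ ∑ q' φ` (`gibbs`), with equality at `q' = q`. The
right-hand side is linear in `q'`, so it is optimized by a deterministic rule: by the Markov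
property `f(V)` is a randomized function of `Y`, and letting `g(y)` minimize
`m ↦ ∑ₓ P(x,y) (C - φ(x,m))` can only decrease the expected cost `C - φ` (`exists_quantizer`).
Hence `I(X; g(Y)) ≥ I(X; f(V))` (`tsum_infoDensity_le_of_cost_le`).

The cost is handled in `ℝ≥0∞`, with value `∞` where `q(x,m) = 0`. Tonelli's theorem then needs no
side conditions, and finiteness of the expected cost yields `q' ≪ q` as well as all summability
required over infinite alphabets. Finally, `I(X; g(Y))` is bounded by a constant depending only on
`M` (`miBits_le`), so that the supremum defining `quantMI` is a genuine one.
-/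

open scoped BigOperators

/-- Mutual information (in bits) of a joint probability mass function `p` on `𝒳 × 𝒴`,
with the convention `0 · log 0 = 0`. -/
noncomputable def miBits {𝒳 𝒴 : Type*} (p : 𝒳 → 𝒴 → ℝ) : ℝ :=
  ∑' x, ∑' y, p x y * Real.logb 2 (p x y / ((∑' y', p x y') * (∑' x', p x' y)))

/-- `p` is a joint probability mass function. -/
def IsJointPMF {𝒳 𝒴 : Type*} (p : 𝒳 → 𝒴 → ℝ) : Prop :=
  (∀ x y, 0 ≤ p x y) ∧ Summable (fun xy : 𝒳 × 𝒴 => p xy.1 xy.2) ∧ (∑' x, ∑' y, p x y) = 1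

/-- Joint pmf of `(X, f(Y))` when `(X,Y) ~ p` and `f` is a deterministic `M`-level quantizer. -/
noncomputable def quantJoint {𝒳 𝒴 : Type*} (p : 𝒳 → 𝒴 → ℝ) {M : ℕ} (f : 𝒴 → Fin M) :
    𝒳 → Fin M → ℝ :=
  fun x m => ∑' y, if f y = m then p x y else 0

/-- `I(X;[Y]_M)`: the best mutual information achievable by a deterministic `M`-level
quantizer of `Y`. -/
noncomputable def quantMI {𝒳 𝒴 : Type*} (p : 𝒳 → 𝒴 → ℝ) (M : ℕ) : ℝ :=
  ⨆ f : 𝒴 → Fin M, miBits (quantJoint p f)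

/-- The information distillation function `ID_M(K, β)`. -/
noncomputable def ID (M K : ℕ) (β : ℝ) : ℝ :=
  sInf {v | ∃ p : Fin K → ℕ → ℝ, IsJointPMF p ∧ β ≤ miBits p ∧ v = quantMI p M}

/-- Binary entropy function (bits). -/
noncomputable def hBin (t : ℝ) : ℝ :=
  -(t * Real.logb 2 t) - (1 - t) * Real.logb 2 (1 - t)

open scoped ENNReal

/-! ### Joint probability mass functions and their quantizations -/

lemma IsJointPMF.tsum_ofReal {α β : Type*} {P : α → β → ℝ} (h : IsJointPMF P) :
    ∑' x, ∑' y, ENNReal.ofReal (P x y) = 1 := by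
  obtain ⟨hnn, hs, h1⟩ := h
  rw [← ENNReal.tsum_prod (f := fun x y => ENNReal.ofReal (P x y)),
    ← ENNReal.ofReal_tsum_of_nonneg (f := fun t : α × β => P t.1 t.2) (fun t => hnn t.1 t.2) hs,
    hs.tsum_prod, h1, ENNReal.ofReal_one]

lemma summable_of_tsum_ofReal {α : Type*} {u : α → ℝ} (hnn : ∀ a, 0 ≤ u a)
    (h : ∑' a, ENNReal.ofReal (u a) ≠ ∞) : Summable u := by
  have := ENNReal.summable_toReal h
  simpa [ENNReal.toReal_ofReal (hnn _)] using this

lemma isJointPMF_of_tsum_ofReal {α β : Type*} {P : α → β → ℝ} (hnn : ∀ x y, 0 ≤ P x y)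
    (h : ∑' x, ∑' y, ENNReal.ofReal (P x y) = 1) : IsJointPMF P := by
  have hp : ∑' t : α × β, ENNReal.ofReal (P t.1 t.2) = 1 := by
    rw [ENNReal.tsum_prod (f := fun x y => ENNReal.ofReal (P x y)), h]
  have hs : Summable (fun t : α × β => P t.1 t.2) :=
    summable_of_tsum_ofReal (fun t => hnn t.1 t.2) (by rw [hp]; simp)
  refine ⟨hnn, hs, ?_⟩
  rw [← ENNReal.ofReal_tsum_of_nonneg (f := fun t : α × β => P t.1 t.2) (fun t => hnn t.1 t.2) hs,
    hs.tsum_prod] at hp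
  simpa using hp

lemma IsJointPMF.summable_row {α β : Type*} {P : α → β → ℝ} (h : IsJointPMF P) (x : α) :
    Summable (P x) := h.2.1.prod_factor x

lemma IsJointPMF.summable_col {α β : Type*} {P : α → β → ℝ} (h : IsJointPMF P) (y : β) :
    Summable (fun x => P x y) := h.2.1.prod_symm.prod_factor y

lemma ofReal_quantJoint {α β : Type*} {P : α → β → ℝ} (h : IsJointPMF P) {M : ℕ}
    (f : β → Fin M) (x : α) (m : Fin M) :
    ENNReal.ofReal (quantJoint P f x m) = ∑' y, if f y = m then ENNReal.ofReal (P x y) else 0 := by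
  unfold quantJoint
  rw [ENNReal.ofReal_tsum_of_nonneg]
  · refine tsum_congr fun y => ?_
    split_ifs <;> simp
  · intro y
    split_ifs
    · exact h.1 x y
    · exact le_rfl
  · refine Summable.of_nonneg_of_le (fun y => ?_) (fun y => ?_) (h.summable_row x)
    · split_ifs
      · exact h.1 x y
      · exact le_rfl
    · split_ifs
      · exact le_rfl
      · exact h.1 x y

/-- Change of variables: integrating `e` against the law of `f(Y)` is integrating `e ∘ f` against
the law of `Y`, on the event `X = x`. -/
lemma tsum_quantJoint_mul {α β : Type*} {P : α → β → ℝ} (h : IsJointPMF P) {M : ℕ}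
    (f : β → Fin M) (x : α) (e : Fin M → ℝ≥0∞) :
    ∑' m, ENNReal.ofReal (quantJoint P f x m) * e m
      = ∑' y, ENNReal.ofReal (P x y) * e (f y) := by
  simp_rw [ofReal_quantJoint h, ← ENNReal.tsum_mul_right]
  rw [ENNReal.tsum_comm]
  refine tsum_congr fun y => ?_
  rw [tsum_eq_single (f y)]
  · simp
  · intro m hm
    simp [hm.symm]

lemma quantJoint_nonneg {α β : Type*} {P : α → β → ℝ} (h : IsJointPMF P) {M : ℕ}
    (f : β → Fin M) (x : α) (m : Fin M) : 0 ≤ quantJoint P f x m := by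
  refine tsum_nonneg fun y => ?_
  split_ifs
  · exact h.1 x y
  · exact le_rfl

lemma isJointPMF_quantJoint {α β : Type*} {P : α → β → ℝ} (h : IsJointPMF P) {M : ℕ}
    (f : β → Fin M) : IsJointPMF (quantJoint P f) := by
  refine isJointPMF_of_tsum_ofReal (quantJoint_nonneg h f) ?_
  rw [← h.tsum_ofReal]
  refine tsum_congr fun x => ?_
  simpa using tsum_quantJoint_mul h f x (fun _ => 1)

lemma ofReal_row_quantJoint {α β : Type*} {P : α → β → ℝ} (h : IsJointPMF P) {M : ℕ}
    (f : β → Fin M) (x : α) :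
    ENNReal.ofReal (∑' m, quantJoint P f x m) = ∑' y, ENNReal.ofReal (P x y) := by
  rw [ENNReal.ofReal_tsum_of_nonneg (quantJoint_nonneg h f x)
    ((isJointPMF_quantJoint h f).summable_row x)]
  simpa using tsum_quantJoint_mul h f x (fun _ => 1)

/-! ### Information density and mutual information in nats -/

/-- The information density `log (q(x,m) / (q(x) q(m)))`, in nats. -/
noncomputable def infoDensity {α β : Type*} (q : α → β → ℝ) (x : α) (m : β) : ℝ :=
  Real.log (q x m / ((∑' m', q x m') * (∑' x', q x' m)))

lemma miBits_eq {α : Type*} {M : ℕ} {q : α → Fin M → ℝ}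
    (hs : Summable (fun t : α × Fin M => q t.1 t.2 * infoDensity q t.1 t.2)) :
    miBits q = (∑' t : α × Fin M, q t.1 t.2 * infoDensity q t.1 t.2) / Real.log 2 := by
  rw [hs.tsum_prod, ← tsum_div_const]
  unfold miBits
  refine tsum_congr fun x => ?_
  rw [← tsum_div_const]
  refine tsum_congr fun m => ?_
  rw [infoDensity, Real.logb, mul_div_assoc]

lemma IsJointPMF.le_row {α β : Type*} {q : α → β → ℝ} (h : IsJointPMF q) (x : α) (m : β) :
    q x m ≤ ∑' m', q x m' :=
  (h.summable_row x).le_tsum m (fun _ _ => h.1 _ _)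

lemma IsJointPMF.le_col {α β : Type*} {q : α → β → ℝ} (h : IsJointPMF q) (x : α) (m : β) :
    q x m ≤ ∑' x', q x' m :=
  (h.summable_col m).le_tsum x (fun _ _ => h.1 _ _)

lemma infoDensity_le {α β : Type*} {q : α → β → ℝ} (h : IsJointPMF q) {x : α} {m : β}
    (hq : 0 < q x m) : infoDensity q x m ≤ -Real.log (∑' x', q x' m) := by
  have hr := h.le_row x m
  have hc := h.le_col x m
  rw [← Real.log_inv]
  refine Real.log_le_log (by have := hq.trans_le hr; have := hq.trans_le hc; positivity) ?_
  rw [div_le_iff₀ (by have := hq.trans_le hr; have := hq.trans_le hc; positivity)]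
  have : 0 < ∑' x', q x' m := hq.trans_le hc
  field_simp
  exact hr

/-- Pointwise upper bound whose sum over `x` is at most `1` for each `m`. -/
lemma mul_infoDensity_le {α β : Type*} {q : α → β → ℝ} (h : IsJointPMF q) (x : α) (m : β) :
    q x m * infoDensity q x m ≤ q x m / ∑' x', q x' m := by
  rcases (h.1 x m).eq_or_lt with h0 | h0
  · simp [← h0]
  · have hc := h0.trans_le (h.le_col x m)
    have h1 := infoDensity_le h h0
    have h2 := Real.log_le_sub_one_of_pos (inv_pos.2 hc)
    rw [Real.log_inv] at h2
    rw [div_eq_mul_inv]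
    exact mul_le_mul_of_nonneg_left (by linarith) h0.le

/-- Pointwise form of Gibbs' inequality. The parenthesized correction on the left sums to zero
over `x` when `r ≪ q`; see `hasSum_gibbs_correction`. -/
lemma gibbs_term {α β : Type*} {q r : α → β → ℝ} (hq : IsJointPMF q) (hr : IsJointPMF r)
    (hrow : ∀ x, ∑' m, q x m = ∑' m, r x m) (x : α) (m : β) (hac : q x m = 0 → r x m = 0) :
    (r x m - (∑' x', r x' m) * (q x m / ∑' x', q x' m)) + r x m * infoDensity q x m
      ≤ r x m * infoDensity r x m := by
  rcases (hr.1 x m).eq_or_lt with h0 | h0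
  · have h1 : 0 ≤ ∑' x', r x' m := tsum_nonneg fun x' => hr.1 x' m
    have h2 : 0 ≤ ∑' x', q x' m := tsum_nonneg fun x' => hq.1 x' m
    have h3 := hq.1 x m
    have : 0 ≤ (∑' x', r x' m) * (q x m / ∑' x', q x' m) := by positivity
    simp only [← h0]
    linarith
  · have hq0 : 0 < q x m := (hq.1 x m).lt_of_ne fun h => h0.ne' (hac h.symm)
    have hrx := h0.trans_le (hr.le_row x m)
    have hrm := h0.trans_le (hr.le_col x m)
    have hqm := hq0.trans_le (hq.le_col x m)
    unfold infoDensity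
    rw [hrow x]
    set a := ∑' m', r x m'
    set b := ∑' x', r x' m
    set c := ∑' x', q x' m
    have key := Real.log_le_sub_one_of_pos (x := b * q x m / (c * r x m)) (by positivity)
    rw [Real.log_div (by positivity) (by positivity), Real.log_mul hrm.ne' hq0.ne',
      Real.log_mul hqm.ne' h0.ne'] at key
    rw [Real.log_div hq0.ne' (by positivity), Real.log_div h0.ne' (by positivity),
      Real.log_mul hrx.ne' hqm.ne', Real.log_mul hrx.ne' hrm.ne']
    have key2 := mul_le_mul_of_nonneg_left key h0.le
    have e : r x m * (b * q x m / (c * r x m) - 1) = b * (q x m / c) - r x m := by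
      field_simp
    rw [e] at key2
    linarith

/-- The correction terms of `gibbs_term` sum to zero over `x`. -/
lemma hasSum_gibbs_correction {α β : Type*} {q r : α → β → ℝ} (hq : IsJointPMF q)
    (hr : IsJointPMF r) (hac : ∀ x m, q x m = 0 → r x m = 0) (m : β) :
    HasSum (fun x => r x m - (∑' x', r x' m) * (q x m / ∑' x', q x' m)) 0 := by
  have h1 := (hr.summable_col m).hasSum.sub
    (((hq.summable_col m).hasSum.div_const (∑' x', q x' m)).mul_left (∑' x', r x' m))
  have h2 : (∑' x', r x' m) - (∑' x', r x' m) * ((∑' x', q x' m) / ∑' x', q x' m) = 0 := by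
    by_cases h0 : ∑' x', q x' m = 0
    · have : ∀ x, r x m = 0 := fun x =>
        hac x m (le_antisymm (h0 ▸ hq.le_col x m) (hq.1 x m))
      simp [this]
    · rw [div_self h0]
      ring
  rwa [h2] at h1

lemma summable_prod_fin {α : Type*} {M : ℕ} {u : α × Fin M → ℝ}
    (h : ∀ m, Summable fun x => u (x, m)) : Summable u := by
  rw [← (Equiv.prodComm (Fin M) α).summable_iff]
  rw [← (Equiv.sigmaEquivProd (Fin M) α).summable_iff]
  have key : Summable fun t : (Σ _ : Fin M, α) => ‖u (t.2, t.1)‖ := by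
    rw [summable_sigma_of_nonneg fun _ => norm_nonneg _]
    exact ⟨fun m => (h m).norm, Summable.of_finite⟩
  exact key.of_norm

lemma tsum_prod_fin {α : Type*} {M : ℕ} {u : α × Fin M → ℝ}
    (h : ∀ m, Summable fun x => u (x, m)) : ∑' t, u t = ∑ m, ∑' x, u (x, m) := by
  have hs := (summable_prod_fin h).prod_symm
  rw [← (Equiv.prodComm (Fin M) α).tsum_eq]
  rw [← tsum_fintype (L := .unconditional _)]
  exact hs.tsum_prod

lemma summable_mul_infoDensity {α : Type*} {M : ℕ} {q : α → Fin M → ℝ} (h : IsJointPMF q) :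
    Summable (fun t : α × Fin M => q t.1 t.2 * infoDensity q t.1 t.2) := by
  refine summable_prod_fin fun m => ?_
  have hrow : Summable fun x => ∑' m, q x m := h.2.1.prod
  have hl : Summable fun x => q x m - (∑' m', q x m') * (∑' x', q x' m) :=
    (h.summable_col m).sub (hrow.mul_right _)
  have hu : Summable fun x => q x m / ∑' x', q x' m := (h.summable_col m).div_const _
  have lower : ∀ x, q x m - (∑' m', q x m') * (∑' x', q x' m) ≤ q x m * infoDensity q x m := by
    intro x
    rcases (h.1 x m).eq_or_lt with h0 | h0
    · have h1 : 0 ≤ ∑' x', q x' m := tsum_nonneg fun x' => h.1 x' m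
      have h2 : 0 ≤ ∑' m', q x m' := tsum_nonneg fun m' => h.1 x m'
      have := mul_nonneg h2 h1
      simp only [← h0]
      linarith
    · have ha := h0.trans_le (h.le_row x m)
      have hb := h0.trans_le (h.le_col x m)
      unfold infoDensity
      set a := ∑' m', q x m'
      set b := ∑' x', q x' m
      have key := mul_le_mul_of_nonneg_left
        (Real.one_sub_inv_le_log_of_pos (x := q x m / (a * b)) (by positivity)) h0.le
      have e : q x m * (1 - (q x m / (a * b))⁻¹) = q x m - a * b := by field_simp
      linarith
  have hd : Summable fun x => q x m * infoDensity q x m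
      - (q x m - (∑' m', q x m') * (∑' x', q x' m)) :=
    Summable.of_nonneg_of_le (fun x => sub_nonneg.2 (lower x))
      (fun x => sub_le_sub_right (mul_infoDensity_le h x m) _) (hu.sub hl)
  simpa using hd.add hl

/-- A crude bound on the mutual information with an `M`-valued variable, uniform in the joint
law. -/
lemma miBits_le {α : Type*} {M : ℕ} {q : α → Fin M → ℝ} (h : IsJointPMF q) :
    miBits q ≤ M / Real.log 2 := by
  have hs := summable_mul_infoDensity h
  rw [miBits_eq hs]
  have hu : ∀ m, Summable fun x => q x m / ∑' x', q x' m := fun m =>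
    (h.summable_col m).div_const _
  have hl : 0 < Real.log 2 := Real.log_pos one_lt_two
  refine div_le_div_of_nonneg_right ?_ hl.le
  calc _ ≤ ∑' t : α × Fin M, q t.1 t.2 / ∑' x', q x' t.2 :=
        hs.tsum_le_tsum (fun t => mul_infoDensity_le h t.1 t.2)
          (summable_prod_fin (u := fun t : α × Fin M => q t.1 t.2 / ∑' x', q x' t.2) hu)
    _ = ∑ m, ∑' x, q x m / ∑' x', q x' m :=
        tsum_prod_fin (u := fun t : α × Fin M => q t.1 t.2 / ∑' x', q x' t.2) hu
    _ ≤ ∑ m : Fin M, (1 : ℝ) := by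
        refine Finset.sum_le_sum fun m _ => ?_
        rw [tsum_div_const]
        exact div_self_le_one _
    _ = M := by simp

/-- Gibbs' inequality: `I(r)` is at least the expectation under `r` of the information density of
`q`, for every `q` with the same `X`-marginal and `r ≪ q`. -/
lemma gibbs {α : Type*} {M : ℕ} {q r : α → Fin M → ℝ} (hq : IsJointPMF q) (hr : IsJointPMF r)
    (hrow : ∀ x, ∑' m, q x m = ∑' m, r x m) (hac : ∀ x m, q x m = 0 → r x m = 0)
    (hrq : Summable fun t : α × Fin M => r t.1 t.2 * infoDensity q t.1 t.2) :
    ∑' t : α × Fin M, r t.1 t.2 * infoDensity q t.1 t.2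
      ≤ ∑' t : α × Fin M, r t.1 t.2 * infoDensity r t.1 t.2 := by
  obtain ⟨u, hu⟩ : ∃ u : α × Fin M → ℝ, ∀ t, u t =
      r t.1 t.2 - (∑' x', r x' t.2) * (q t.1 t.2 / ∑' x', q x' t.2) := ⟨_, fun _ => rfl⟩
  have hz : ∀ m, HasSum (fun x => u (x, m)) 0 := fun m => by
    simpa only [hu] using hasSum_gibbs_correction hq hr hac m
  have hus : Summable u := summable_prod_fin fun m => (hz m).summable
  have hu0 : ∑' t, u t = 0 := by
    rw [tsum_prod_fin fun m => (hz m).summable]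
    exact Finset.sum_eq_zero fun m _ => (hz m).tsum_eq
  have hle : ∀ t : α × Fin M, u t + r t.1 t.2 * infoDensity q t.1 t.2
      ≤ r t.1 t.2 * infoDensity r t.1 t.2 := fun t => by
    rw [hu]
    exact gibbs_term hq hr hrow t.1 t.2 (hac t.1 t.2)
  have hg := (hus.add hrq).tsum_le_tsum hle (summable_mul_infoDensity hr)
  rw [hus.tsum_add hrq, hu0, zero_add] at hg
  exact hg

/-! ### The linearized problem -/

/-- The cost `C - φ(x,m)`, where `φ` is the information density of `q` and `C` is an upper bound
for `φ` on the support of `q`; it is infinite off the support. -/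
noncomputable def infoCost {α : Type*} {M : ℕ} (q : α → Fin M → ℝ) (x : α) (m : Fin M) : ℝ≥0∞ :=
  open Classical in
  if q x m = 0 then ∞
  else ENNReal.ofReal ((∑ m', |Real.log (∑' x', q x' m')|) - infoDensity q x m)

lemma infoDensity_le_const {α : Type*} {M : ℕ} {q : α → Fin M → ℝ} (h : IsJointPMF q) {x : α}
    {m : Fin M} (hq : q x m ≠ 0) :
    infoDensity q x m ≤ ∑ m', |Real.log (∑' x', q x' m')| := by
  refine (infoDensity_le h ((h.1 x m).lt_of_ne' hq)).trans ((neg_le_abs _).trans ?_)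
  exact Finset.single_le_sum (f := fun m' => |Real.log (∑' x', q x' m')|)
    (fun _ _ => abs_nonneg _) (Finset.mem_univ m)

lemma ofReal_mul_infoCost {α : Type*} {M : ℕ} {q r : α → Fin M → ℝ}
    (hr : IsJointPMF r) {x : α} {m : Fin M} (hac : q x m = 0 → r x m = 0) :
    ENNReal.ofReal (r x m) * infoCost q x m = ENNReal.ofReal
      (r x m * ((∑ m', |Real.log (∑' x', q x' m')|) - infoDensity q x m)) := by
  unfold infoCost
  split_ifs with h0
  · simp [hac h0]
  · rw [ENNReal.ofReal_mul (hr.1 x m)]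

lemma mul_const_sub_infoDensity_nonneg {α : Type*} {M : ℕ} {q r : α → Fin M → ℝ}
    (hq : IsJointPMF q) (hr : IsJointPMF r) {x : α} {m : Fin M} (hac : q x m = 0 → r x m = 0) :
    0 ≤ r x m * ((∑ m', |Real.log (∑' x', q x' m')|) - infoDensity q x m) := by
  by_cases h0 : q x m = 0
  · simp [hac h0]
  · exact mul_nonneg (hr.1 x m) (sub_nonneg.2 (infoDensity_le_const hq h0))

/-- A joint law with the same `X`-marginal as `q` and no larger expected cost carries at least as
much information as `q`. -/
lemma tsum_infoDensity_le_of_cost_le {α : Type*} {M : ℕ} {q r : α → Fin M → ℝ} (hq : IsJointPMF q)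
    (hr : IsJointPMF r) (hrow : ∀ x, ∑' m, q x m = ∑' m, r x m)
    (hcost : ∑' x, ∑' m, ENNReal.ofReal (r x m) * infoCost q x m
      ≤ ∑' x, ∑' m, ENNReal.ofReal (q x m) * infoCost q x m) :
    ∑' t : α × Fin M, q t.1 t.2 * infoDensity q t.1 t.2
      ≤ ∑' t : α × Fin M, r t.1 t.2 * infoDensity r t.1 t.2 := by
  rw [← ENNReal.tsum_prod (f := fun x m => ENNReal.ofReal (r x m) * infoCost q x m),
    ← ENNReal.tsum_prod (f := fun x m => ENNReal.ofReal (q x m) * infoCost q x m)] at hcost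
  set C := ∑ m', |Real.log (∑' x', q x' m')|
  have hqs := summable_mul_infoDensity hq
  have hqc : Summable fun t : α × Fin M => q t.1 t.2 * (C - infoDensity q t.1 t.2) := by
    simpa [mul_sub] using (hq.2.1.mul_right C).sub hqs
  have eq1 : ∑' t : α × Fin M, ENNReal.ofReal (q t.1 t.2) * infoCost q t.1 t.2
      = ENNReal.ofReal (∑' t : α × Fin M, q t.1 t.2 * (C - infoDensity q t.1 t.2)) := by
    rw [ENNReal.ofReal_tsum_of_nonneg
      (fun t => mul_const_sub_infoDensity_nonneg hq hq id) hqc]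
    exact tsum_congr fun t => ofReal_mul_infoCost hq id
  have hfin : ∑' t : α × Fin M, ENNReal.ofReal (r t.1 t.2) * infoCost q t.1 t.2 ≠ ∞ :=
    ne_top_of_le_ne_top (eq1 ▸ ENNReal.ofReal_ne_top) hcost
  -- The cost is infinite where `q` vanishes, so a finite expected cost forces `r ≪ q`.
  have hac : ∀ x m, q x m = 0 → r x m = 0 := by
    intro x m h0
    by_contra hne
    have hpos : 0 < r x m := (hr.1 x m).lt_of_ne' hne
    refine ENNReal.ne_top_of_tsum_ne_top hfin (x, m) ?_
    simp [infoCost, h0, ENNReal.mul_top, hpos]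
  have hrc : Summable fun t : α × Fin M => r t.1 t.2 * (C - infoDensity q t.1 t.2) := by
    refine summable_of_tsum_ofReal
      (fun t => mul_const_sub_infoDensity_nonneg hq hr (hac _ _)) ?_
    rwa [← tsum_congr fun t : α × Fin M => ofReal_mul_infoCost hr (hac t.1 t.2)]
  have eq2 : ∑' t : α × Fin M, ENNReal.ofReal (r t.1 t.2) * infoCost q t.1 t.2
      = ENNReal.ofReal (∑' t : α × Fin M, r t.1 t.2 * (C - infoDensity q t.1 t.2)) := by
    rw [ENNReal.ofReal_tsum_of_nonneg
      (fun t => mul_const_sub_infoDensity_nonneg hq hr (hac _ _)) hrc]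
    exact tsum_congr fun t => ofReal_mul_infoCost hr (hac _ _)
  rw [eq1, eq2, ENNReal.ofReal_le_ofReal_iff
    (tsum_nonneg fun t => mul_const_sub_infoDensity_nonneg hq hq id)] at hcost
  have hrq : Summable fun t : α × Fin M => r t.1 t.2 * infoDensity q t.1 t.2 := by
    simpa [mul_sub] using (hr.2.1.mul_right C).sub hrc
  have tot : ∀ {s : α → Fin M → ℝ}, IsJointPMF s → ∑' t : α × Fin M, s t.1 t.2 = 1 :=
    fun hs => by rw [hs.2.1.tsum_prod, hs.2.2]
  simp only [mul_sub] at hcost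
  rw [(hr.2.1.mul_right C).tsum_sub hrq, (hq.2.1.mul_right C).tsum_sub hqs, tsum_mul_right,
    tsum_mul_right, tot hq, tot hr] at hcost
  have hg := gibbs hq hr hrow hac hrq
  linarith

/-- For a Markov chain, the best deterministic decision based on `Y` costs at most as much as the
decision `f(V)`. The hypothesis is `P(x,y,v) P(y) = P(x,y) P(y,v)`. -/
lemma exists_quantizer {α β γ : Type*} (p : α → β → γ → ℝ≥0∞)
    (hfin : ∀ y, ∑' x, ∑' v, p x y v ≠ ∞)
    (hmarkov : ∀ x y v,
      p x y v * (∑' x', ∑' v', p x' y v') = (∑' v', p x y v') * (∑' x', p x' y v))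
    {M : ℕ} (hM : 0 < M) (f : γ → Fin M) (d : α → Fin M → ℝ≥0∞) :
    ∃ g : β → Fin M, ∑' x, ∑' y, (∑' v, p x y v) * d x (g y)
      ≤ ∑' x, ∑' y, ∑' v, p x y v * d x (f v) := by
  have : Nonempty (Fin M) := ⟨⟨0, hM⟩⟩
  choose g hg using fun y =>
    Finite.exists_min (fun m : Fin M => ∑' x, (∑' v, p x y v) * d x m)
  refine ⟨g, ?_⟩
  rw [ENNReal.tsum_comm, ENNReal.tsum_comm (f := fun x y => ∑' v, p x y v * d x (f v))]
  refine ENNReal.tsum_le_tsum fun y => ?_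
  by_cases h0 : ∑' x, ∑' v, p x y v = 0
  · have : ∀ x, ∑' v, p x y v = 0 := ENNReal.tsum_eq_zero.1 h0
    simp [this]
  · refine (ENNReal.mul_le_mul_iff_right h0 (hfin y)).1 ?_
    calc (∑' x, ∑' v, p x y v) * ∑' x, (∑' v, p x y v) * d x (g y)
        = ∑' v, (∑' x', p x' y v) * ∑' x, (∑' v, p x y v) * d x (g y) := by
          rw [ENNReal.tsum_mul_right, ENNReal.tsum_comm]
      _ ≤ ∑' v, (∑' x', p x' y v) * ∑' x, (∑' v, p x y v) * d x (f v) :=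
          ENNReal.tsum_le_tsum fun v => mul_le_mul_right (hg y (f v)) _
      _ = ∑' v, ∑' x, (∑' x, ∑' v, p x y v) * (p x y v * d x (f v)) := by
          refine tsum_congr fun v => ?_
          rw [← ENNReal.tsum_mul_left]
          refine tsum_congr fun x => ?_
          rw [← mul_assoc, ← mul_assoc, mul_comm (∑' x', p x' y v), ← hmarkov x y v,
            mul_comm (p x y v)]
      _ = (∑' x, ∑' v, p x y v) * ∑' x, ∑' v, p x y v * d x (f v) := by
          rw [ENNReal.tsum_comm]
          simp_rw [ENNReal.tsum_mul_left]

/-! ### Data processing -/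

/-- Proposition 3 (Data processing inequality): if `X - Y - V` is a Markov chain,
then `I(X;[V]_M) ≤ I(X;[Y]_M)`. The Markov property is expressed as
`P(x,y,v) P(y) = P(x,y) P(y,v)` for all `x, y, v`. -/
theorem quantized_data_processing {𝒳 𝒴 𝒱 : Type*} [Countable 𝒳] [Countable 𝒴] [Countable 𝒱]
    (p : 𝒳 → 𝒴 → 𝒱 → ℝ)
    (hnn : ∀ x y v, 0 ≤ p x y v)
    (hsum : Summable (fun t : 𝒳 × 𝒴 × 𝒱 => p t.1 t.2.1 t.2.2))
    (htot : (∑' x, ∑' y, ∑' v, p x y v) = 1)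
    (hmarkov : ∀ x y v,
      p x y v * (∑' x', ∑' v', p x' y v') = (∑' v', p x y v') * (∑' x', p x' y v))
    (M : ℕ) (hM : 0 < M) :
    quantMI (fun x v => ∑' y, p x y v) M ≤ quantMI (fun x y => ∑' v, p x y v) M := by
  have sYV : ∀ x, Summable fun t : 𝒴 × 𝒱 => p x t.1 t.2 := fun x => hsum.prod_factor x
  have sV : ∀ x y, Summable fun v => p x y v := fun x y => (sYV x).prod_factor y
  have sY : ∀ x v, Summable fun y => p x y v := fun x v => (sYV x).prod_symm.prod_factor v
  have sXV : ∀ y, Summable fun t : 𝒳 × 𝒱 => p t.1 y t.2 := fun y =>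
    hsum.comp_injective (i := fun t : 𝒳 × 𝒱 => (t.1, y, t.2)) fun a b hab => by
      simp only [Prod.mk.injEq, true_and] at hab
      exact Prod.ext hab.1 hab.2
  have sX : ∀ y v, Summable fun x => p x y v := fun y v => (sXV y).prod_symm.prod_factor v
  have sXm : ∀ y, Summable fun x => ∑' v, p x y v := fun y => (sXV y).prod
  have oV : ∀ x y, ENNReal.ofReal (∑' v, p x y v) = ∑' v, ENNReal.ofReal (p x y v) :=
    fun x y => ENNReal.ofReal_tsum_of_nonneg (hnn x y) (sV x y)
  have oY : ∀ x v, ENNReal.ofReal (∑' y, p x y v) = ∑' y, ENNReal.ofReal (p x y v) :=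
    fun x v => ENNReal.ofReal_tsum_of_nonneg (fun y => hnn x y v) (sY x v)
  have oX : ∀ y v, ENNReal.ofReal (∑' x, p x y v) = ∑' x, ENNReal.ofReal (p x y v) :=
    fun y v => ENNReal.ofReal_tsum_of_nonneg (fun x => hnn x y v) (sX y v)
  have oXV : ∀ y, ENNReal.ofReal (∑' x, ∑' v, p x y v)
      = ∑' x, ∑' v, ENNReal.ofReal (p x y v) := fun y => by
    rw [ENNReal.ofReal_tsum_of_nonneg (fun x => tsum_nonneg (hnn x y)) (sXm y)]
    exact tsum_congr fun x => oV x y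
  have hXY : IsJointPMF fun x y => ∑' v, p x y v := by
    refine ⟨fun x y => tsum_nonneg (hnn x y), ?_, htot⟩
    exact ((Equiv.prodAssoc 𝒳 𝒴 𝒱).summable_iff.2 hsum).prod
  have hXV : IsJointPMF fun x v => ∑' y, p x y v := by
    refine isJointPMF_of_tsum_ofReal (fun x v => tsum_nonneg fun y => hnn x y v) ?_
    rw [← hXY.tsum_ofReal]
    refine tsum_congr fun x => ?_
    simp_rw [oV, oY]
    exact ENNReal.tsum_comm
  have : Nonempty (𝒱 → Fin M) := ⟨fun _ => ⟨0, hM⟩⟩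
  refine ciSup_le fun f => ?_
  set q := quantJoint (fun x v => ∑' y, p x y v) f
  have hq : IsJointPMF q := isJointPMF_quantJoint hXV f
  obtain ⟨g, hg⟩ := exists_quantizer (fun x y v => ENNReal.ofReal (p x y v))
    (fun y => by rw [← oXV]; exact ENNReal.ofReal_ne_top)
    (fun x y v => by
      rw [← oXV, ← oV, ← oX, ← ENNReal.ofReal_mul (hnn x y v),
        ← ENNReal.ofReal_mul (tsum_nonneg (hnn x y)), hmarkov])
    hM f (infoCost q)
  have hr := isJointPMF_quantJoint hXY g
  have hbdd : BddAbove (Set.range fun g : 𝒴 → Fin M =>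
      miBits (quantJoint (fun x y => ∑' v, p x y v) g)) :=
    ⟨M / Real.log 2, by
      rintro _ ⟨g, rfl⟩
      exact miBits_le (isJointPMF_quantJoint hXY g)⟩
  refine le_ciSup_of_le hbdd g ?_
  rw [miBits_eq (summable_mul_infoDensity hq), miBits_eq (summable_mul_infoDensity hr)]
  refine div_le_div_of_nonneg_right ?_ (Real.log_pos one_lt_two).le
  refine tsum_infoDensity_le_of_cost_le hq hr (fun x => ?_) ?_
  · rw [← ENNReal.ofReal_eq_ofReal_iff (tsum_nonneg (hq.1 x)) (tsum_nonneg (hr.1 x)),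
      ofReal_row_quantJoint hXV, ofReal_row_quantJoint hXY]
    simp_rw [oV, oY]
    exact ENNReal.tsum_comm
  · rw [tsum_congr fun x => tsum_quantJoint_mul hXY g x (infoCost q x),
      tsum_congr fun x => tsum_quantJoint_mul hXV f x (infoCost q x)]
    simp_rw [oV, oY]
    refine hg.trans_eq (tsum_congr fun x => ?_)
    rw [ENNReal.tsum_comm]
    simp_rw [ENNReal.tsum_mul_right]
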